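/- arXiv:1909.06341 — 6 statements merged into one kernel-verified Lean document; each statement's English description precedes it below -/
import Mathlib

section
/- Let D and n be positive integers and let A : Fin D → Matrix (Fin n) (Fin n) ℂ be a finite family of complex matrices. If every eigenvalue λ ∈ ℂ of the transfer map Φ_A satisfies |λ| < 1, then for every index α₀ : Fin D, every eigenvalue of the single matrix A α₀ has modulus strictly less than 1. -/
/-!
Suppose `A α₀ v = μ v` with `v ≠ 0` and `|μ| ≥ 1`. All iterates `Φ_A^k(1)` are positive
semidefinite, and the quadratic form `q_k = v* Φ_A^k(1) v` satisfies
`q_{k+1} = ∑ α, (A α v)* Φ_A^k(1) (A α v) ≥ |μ|² q_k ≥ q_k`, because every summand is nonnegative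
and the one at `α₀` is `|μ|² q_k`. Hence `q_k ≥ q_0 = v* v > 0` for all `k`. On the other hand
the spectrum of `Φ_A` lies in the open unit disc, so `Φ_A^k → 0` by Gelfand's formula
(`tendsto_pow_zero_of_spectrum_lt_one`) and `q_k → 0`, a contradiction.
-/

open Matrix

/-- The transfer map `Φ_A (X) = ∑ α, (A α)ᴴ * X * (A α)` of a finite family of matrices. -/
noncomputable def transferMap {D n : ℕ} (A : Fin D → Matrix (Fin n) (Fin n) ℂ) :
    Matrix (Fin n) (Fin n) ℂ →ₗ[ℂ] Matrix (Fin n) (Fin n) ℂ where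
  toFun X := ∑ α, (A α)ᴴ * X * A α
  map_add' X Y := by simp [Matrix.mul_add, Matrix.add_mul, Finset.sum_add_distrib]
  map_smul' r X := by simp [Matrix.mul_smul, Matrix.smul_mul, Finset.smul_sum]

open Filter Topology ENNReal NNReal in
/-- By Gelfand's formula, `‖a ^ k‖ ≤ r ^ k` eventually, for any `r` strictly between the spectral
radius of `a` and `1`. -/
theorem tendsto_pow_zero_of_spectrum_lt_one {B : Type*} [NormedRing B] [NormedAlgebra ℂ B]
    [CompleteSpace B] [Nontrivial B] (a : B) (h : ∀ z ∈ spectrum ℂ a, ‖z‖ < 1) :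
    Tendsto (fun k : ℕ => a ^ k) atTop (𝓝 0) := by
  have hρ : spectralRadius ℂ a < (1 : ℝ≥0) :=
    spectrum.spectralRadius_lt_of_forall_lt a fun z hz => by
      have := h z hz
      exact_mod_cast this
  obtain ⟨r, hr, hr1⟩ := ENNReal.lt_iff_exists_nnreal_btwn.mp hρ
  have hr1' : r < 1 := by exact_mod_cast hr1
  have hev := (spectrum.pow_nnnorm_pow_one_div_tendsto_nhds_spectralRadius a).eventually_lt_const hr
  refine squeeze_zero_norm' (a := fun k : ℕ => (r : ℝ) ^ k) ?_
    (tendsto_pow_atTop_nhds_zero_of_lt_one r.2 hr1')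
  filter_upwards [hev, eventually_gt_atTop 0] with k hk hk0
  have hk' : (0 : ℝ) < k := by exact_mod_cast hk0
  have h2 := (ENNReal.rpow_lt_rpow hk hk').le
  rw [← ENNReal.rpow_mul, one_div, inv_mul_cancel₀ hk'.ne', ENNReal.rpow_one,
    ENNReal.rpow_natCast] at h2
  exact_mod_cast h2

open Filter Topology in
theorem tendsto_pow_apply_zero_of_spectrum_lt_one {E : Type*} [NormedAddCommGroup E]
    [NormedSpace ℂ E] [FiniteDimensional ℂ E] [Nontrivial E] (f : E →ₗ[ℂ] E)
    (h : ∀ z ∈ spectrum ℂ f, ‖z‖ < 1) (x : E) :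
    Tendsto (fun k : ℕ => (f ^ k) x) atTop (𝓝 0) := by
  have : CompleteSpace E := FiniteDimensional.complete ℂ E
  let e := Module.End.toContinuousLinearMap (𝕜 := ℂ) E
  have h1 := tendsto_pow_zero_of_spectrum_lt_one (e f) (by
    rw [AlgEquiv.spectrum_eq]; exact h)
  have h2 := ((ContinuousLinearMap.apply ℂ E x).continuous.tendsto 0).comp h1
  have h3 : (fun k : ℕ => (f ^ k) x) = (ContinuousLinearMap.apply ℂ E x) ∘ fun k => e f ^ k := by
    funext k
    simp only [Function.comp, ← map_pow]
    rfl
  rw [h3]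
  simpa using h2

open ComplexOrder in
theorem posSemidef_transferMap_pow_one {D n : ℕ} (A : Fin D → Matrix (Fin n) (Fin n) ℂ) (k : ℕ) :
    ((transferMap A ^ k) 1).PosSemidef := by
  induction k with
  | zero => simpa using PosSemidef.one
  | succ k ih =>
    rw [pow_succ', Module.End.mul_apply]
    exact posSemidef_sum _ fun α _ => ih.conjTranspose_mul_mul_same (A α)

theorem star_dotProduct_conj_mulVec {n : ℕ} (B X : Matrix (Fin n) (Fin n) ℂ) (v : Fin n → ℂ) :
    star v ⬝ᵥ (Bᴴ * X * B) *ᵥ v = star (B *ᵥ v) ⬝ᵥ X *ᵥ (B *ᵥ v) := by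
  rw [star_mulVec, ← dotProduct_mulVec, mulVec_mulVec, mulVec_mulVec, Matrix.mul_assoc]

open ComplexOrder in
/-- Only the summand of the transfer map at `α₀` is kept; the others contribute nonnegatively. -/
theorem re_quadratic_form_le_transferMap {D n : ℕ} (A : Fin D → Matrix (Fin n) (Fin n) ℂ)
    {X : Matrix (Fin n) (Fin n) ℂ} (hX : X.PosSemidef) (α₀ : Fin D) {v : Fin n → ℂ} {mu : ℂ}
    (hv : A α₀ *ᵥ v = mu • v) (hmu : 1 ≤ ‖mu‖) :
    (star v ⬝ᵥ X *ᵥ v).re ≤ (star v ⬝ᵥ (transferMap A X) *ᵥ v).re := by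
  have hsum : (star v ⬝ᵥ (transferMap A X) *ᵥ v).re =
      ∑ α, (star (A α *ᵥ v) ⬝ᵥ X *ᵥ (A α *ᵥ v)).re := by
    simp only [← star_dotProduct_conj_mulVec, ← Complex.re_sum, ← dotProduct_sum]
    rw [← sum_mulVec]
    rfl
  have hnonneg : ∀ w : Fin n → ℂ, 0 ≤ (star w ⬝ᵥ X *ᵥ w).re := fun w =>
    (Complex.le_def.mp (hX.dotProduct_mulVec_nonneg w)).1
  have hα₀ : (star (A α₀ *ᵥ v) ⬝ᵥ X *ᵥ (A α₀ *ᵥ v)).re =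
      ‖mu‖ ^ 2 * (star v ⬝ᵥ X *ᵥ v).re := by
    rw [hv, star_smul, mulVec_smul, smul_dotProduct, dotProduct_smul, smul_smul, smul_eq_mul,
      Complex.star_def, Complex.conj_mul', ← Complex.ofReal_pow, Complex.re_ofReal_mul]
  rw [hsum]
  calc (star v ⬝ᵥ X *ᵥ v).re ≤ ‖mu‖ ^ 2 * (star v ⬝ᵥ X *ᵥ v).re :=
        le_mul_of_one_le_left (hnonneg v) (one_le_pow₀ hmu)
    _ = _ := hα₀.symm
    _ ≤ _ := Finset.single_le_sum
        (f := fun α => (star (A α *ᵥ v) ⬝ᵥ X *ᵥ (A α *ᵥ v)).re)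
        (fun α _ => hnonneg _) (Finset.mem_univ α₀)

open Filter Topology ComplexOrder in
theorem spectrum_single_lt_one_of_transfer_spectrum_lt_one
    {D n : ℕ} (hD : 0 < D) (hn : 0 < n)
    (A : Fin D → Matrix (Fin n) (Fin n) ℂ)
    (h : ∀ lam ∈ spectrum ℂ (transferMap A), ‖lam‖ < 1) :
    ∀ α₀ : Fin D, ∀ mu ∈ spectrum ℂ (A α₀), ‖mu‖ < 1 := by
  intro α₀ mu hmu
  by_contra! hge
  have : NeZero n := ⟨hn.ne'⟩
  rw [← Matrix.spectrum_toLin', ← Module.End.hasEigenvalue_iff_mem_spectrum] at hmu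
  obtain ⟨v, hv⟩ := hmu.exists_hasEigenvector
  have hAv : A α₀ *ᵥ v = mu • v := by simpa using hv.apply_eq_smul
  have hpos : 0 < (star v ⬝ᵥ v).re :=
    (Complex.lt_def.mp (dotProduct_star_self_pos_iff.mpr hv.2)).1
  have hlow : ∀ k : ℕ, (star v ⬝ᵥ v).re ≤ (star v ⬝ᵥ ((transferMap A ^ k) 1) *ᵥ v).re := by
    intro k
    induction k with
    | zero => simp
    | succ k ih =>
      rw [pow_succ', Module.End.mul_apply]
      exact ih.trans (re_quadratic_form_le_transferMap A (posSemidef_transferMap_pow_one A k) α₀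
        hAv hge)
  have hcont : Continuous fun X : Matrix (Fin n) (Fin n) ℂ => (star v ⬝ᵥ X *ᵥ v).re := by
    fun_prop
  -- The choice of norm is immaterial: this one induces the usual topology on matrices.
  letI : NormedAddCommGroup (Matrix (Fin n) (Fin n) ℂ) := Matrix.normedAddCommGroup
  letI : NormedSpace ℂ (Matrix (Fin n) (Fin n) ℂ) := Matrix.normedSpace
  have hlim := (hcont.tendsto 0).comp (tendsto_pow_apply_zero_of_spectrum_lt_one _ h 1)
  have hle := ge_of_tendsto' hlim hlow
  simp only [zero_mulVec, dotProduct_zero, Complex.zero_re] at hle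
  linarith
end

section
/- Let A : Fin D → Matrix (Fin n) (Fin n) ℂ and A' : Fin D → Matrix (Fin m) (Fin m) ℂ be finite families, and let L : Matrix (Fin m) (Fin n) ℂ be a matrix of rank m (i.e. L is surjective as a linear map ℂⁿ → ℂᵐ) satisfying the gauge relation L * A α = A' α * L for all α. If every eigenvalue of Φ_A has modulus < 1, then every eigenvalue of Φ_{A'} has modulus < 1 (the first-degree property is preserved under gauge transformations with surjective middle block). -/
/-!
The map `Y ↦ Lᴴ * Y * L` intertwines the two transfer maps, by the gauge relation, and is injective
because the surjective `L` has a right inverse. Hence it carries eigenvectors of `transferMap A'`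
to eigenvectors of `transferMap A` with the same eigenvalue, so the spectrum of the former is
contained in that of the latter.
-/

open Matrix

theorem first_degree_preserved_by_gauge
    {D n m : ℕ}
    (A : Fin D → Matrix (Fin n) (Fin n) ℂ)
    (A' : Fin D → Matrix (Fin m) (Fin m) ℂ)
    (L : Matrix (Fin m) (Fin n) ℂ)
    (hrank : L.rank = m)
    (hsurj : Function.Surjective L.mulVecLin)
    (hgauge : ∀ α, L * A α = A' α * L)
    (hFD : ∀ lam ∈ spectrum ℂ (transferMap A), ‖lam‖ < 1) :
    ∀ lam ∈ spectrum ℂ (transferMap A'), ‖lam‖ < 1 := by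
  intro lam hlam
  apply hFD
  rw [← Module.End.hasEigenvalue_iff_mem_spectrum] at hlam ⊢
  obtain ⟨Y, hY⟩ := hlam.exists_hasEigenvector
  obtain ⟨R, hR⟩ := Matrix.mulVec_surjective_iff_exists_right_inverse.mp hsurj
  have hR' : Rᴴ * Lᴴ = 1 := by rw [← conjTranspose_mul, hR, conjTranspose_one]
  refine Module.End.hasEigenvalue_of_hasEigenvector (x := Lᴴ * Y * L)
    (Module.End.hasEigenvector_iff.mpr ⟨Module.End.mem_eigenspace_iff.mpr ?_, fun h => hY.2 ?_⟩)
  · have hsum : ∑ α, (A' α)ᴴ * Y * A' α = lam • Y := hY.apply_eq_smul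
    change ∑ α, (A α)ᴴ * (Lᴴ * Y * L) * A α = _
    calc ∑ α, (A α)ᴴ * (Lᴴ * Y * L) * A α
        = ∑ α, (L * A α)ᴴ * Y * (L * A α) := by
          simp only [conjTranspose_mul, Matrix.mul_assoc]
      _ = Lᴴ * (∑ α, (A' α)ᴴ * Y * A' α) * L := by
          simp only [hgauge, conjTranspose_mul, Matrix.mul_assoc, Matrix.mul_sum,
            Matrix.sum_mul]
      _ = lam • (Lᴴ * Y * L) := by rw [hsum, Matrix.mul_smul, Matrix.smul_mul]
  · calc Y = (Rᴴ * Lᴴ) * Y * (L * R) := by rw [hR', hR, Matrix.one_mul, Matrix.mul_one]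
      _ = Rᴴ * (Lᴴ * Y * L) * R := by simp only [Matrix.mul_assoc]
      _ = 0 := by rw [h, Matrix.mul_zero, Matrix.zero_mul]
end

section
/- Let V : Fin D → Matrix (Fin m) (Fin m) ℂ, and let Q : ℕ → Fin D → Matrix (Fin m) (Fin m) ℂ, R : ℕ → Matrix (Fin m) (Fin m) ℂ, and V· : ℕ → Fin D → Matrix (Fin m) (Fin m) ℂ satisfy the QR-iteration relations: V₀ = V and, for every n ≥ 1, V_{n-1} α = (Q n α) * (R n), V_n α = (R n) * (Q n α), and ∑_α (Q n α)ᴴ * (Q n α) = 1. Define L_n := (R n) * (R (n-1)) * ⋯ * (R 1) (with L₀ = 1). Then for every n ≥ 0, the n-fold iterate of the transfer map applied to the identity satisfies (Φ_V)^[n] (1) = (L_n)ᴴ * L_n. -/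
/-!
The matrix `L n` intertwines the original family with the `n`-th one: `L n * V α = V_n α * L n`
(`qr_intertwine`). Hence `Φ_V ((L n)ᴴ * L n) = ∑ α, (V_n α * L n)ᴴ * (V_n α * L n)`. Since
`V_n α = Q_{n+1} α * R_{n+1}`, we have `V_n α * L n = Q_{n+1} α * L (n+1)`, and the normalization
`∑ α, (Q α)ᴴ * Q α = 1` collapses the sum to `(L (n+1))ᴴ * L (n+1)`. Induction on `n` concludes.
-/

open Matrix

theorem qr_intertwine {D m : ℕ}
    {Q : ℕ → Fin D → Matrix (Fin m) (Fin m) ℂ}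
    {R : ℕ → Matrix (Fin m) (Fin m) ℂ}
    {Vseq : ℕ → Fin D → Matrix (Fin m) (Fin m) ℂ}
    (hQR : ∀ n : ℕ, ∀ α, Vseq n α = Q (n + 1) α * R (n + 1))
    (hRQ : ∀ n : ℕ, ∀ α, Vseq (n + 1) α = R (n + 1) * Q (n + 1) α)
    {L : ℕ → Matrix (Fin m) (Fin m) ℂ}
    (hL0 : L 0 = 1)
    (hLsucc : ∀ n : ℕ, L (n + 1) = R (n + 1) * L n) (n : ℕ) (α : Fin D) :
    L n * Vseq 0 α = Vseq n α * L n := by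
  induction n with
  | zero => simp [hL0]
  | succ k ih =>
    rw [hLsucc, Matrix.mul_assoc, ih, hQR k, hRQ k]
    simp only [Matrix.mul_assoc]

theorem qr_iteration_computes_transfer_iterates
    {D m : ℕ}
    (V : Fin D → Matrix (Fin m) (Fin m) ℂ)
    (Q : ℕ → Fin D → Matrix (Fin m) (Fin m) ℂ)
    (R : ℕ → Matrix (Fin m) (Fin m) ℂ)
    (Vseq : ℕ → Fin D → Matrix (Fin m) (Fin m) ℂ)
    (hV0 : Vseq 0 = V)
    (hQR : ∀ n : ℕ, ∀ α, Vseq n α = Q (n + 1) α * R (n + 1))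
    (hRQ : ∀ n : ℕ, ∀ α, Vseq (n + 1) α = R (n + 1) * Q (n + 1) α)
    (hQcan : ∀ n : ℕ, 1 ≤ n →
      ∑ α, (Q n α)ᴴ * Q n α = (1 : Matrix (Fin m) (Fin m) ℂ))
    (L : ℕ → Matrix (Fin m) (Fin m) ℂ)
    (hL0 : L 0 = 1)
    (hLsucc : ∀ n : ℕ, L (n + 1) = R (n + 1) * L n) :
    ∀ n : ℕ, (⇑(transferMap V))^[n] (1 : Matrix (Fin m) (Fin m) ℂ) = (L n)ᴴ * L n := by
  intro n
  induction n with
  | zero => simp [hL0]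
  | succ k ih =>
    rw [Function.iterate_succ_apply', ih]
    change ∑ α, (V α)ᴴ * ((L k)ᴴ * L k) * V α = _
    have hterm : ∀ α, (V α)ᴴ * ((L k)ᴴ * L k) * V α
        = (L (k + 1))ᴴ * ((Q (k + 1) α)ᴴ * Q (k + 1) α) * L (k + 1) := by
      intro α
      have hLV : L k * V α = Q (k + 1) α * L (k + 1) := by
        rw [← hV0, qr_intertwine hQR hRQ hL0 hLsucc k α, hQR k, hLsucc, Matrix.mul_assoc]
      calc (V α)ᴴ * ((L k)ᴴ * L k) * V α = (L k * V α)ᴴ * (L k * V α) := by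
            simp only [Matrix.conjTranspose_mul, Matrix.mul_assoc]
        _ = _ := by
            rw [hLV]
            simp only [Matrix.conjTranspose_mul, Matrix.mul_assoc]
    simp only [hterm]
    rw [← Finset.sum_mul, ← Finset.mul_sum, hQcan (k + 1) (by lia), Matrix.mul_one]
end

section
/- Let m be a positive integer. Let 𝒯 be the set of upper-triangular matrices L ∈ Matrix (Fin m) (Fin m) ℂ whose diagonal entries are real and strictly positive, and let 𝒫 be the set of positive definite Hermitian matrices in Matrix (Fin m) (Fin m) ℂ. Then the map L ↦ Lᴴ * L is a bijection from 𝒯 onto 𝒫, and it is a homeomorphism: both the map and its inverse are continuous (with respect to the subspace topologies). -/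
/-!
Writing out `P = Lᴴ * L` for upper triangular `L`, row `i` reads
`P i j = L i i * L i j + ∑ k < i, conj (L k i) * L k j`, as `L i i` is real
(`upperPos.conjTranspose_mul_self_apply`).
Given the rows of `L` above row `i`, the equation with `j = i` determines the positive number
`L i i` as a square root, and then the remaining equations determine `L i j` by division by `L i i`.
By induction on the row, `L` is determined by `P` (injectivity) and depends continuously on `P`
(continuity of the inverse).

Surjectivity is the QR decomposition: write `P = Bᴴ * B` with `B` invertible, so that `P` is the
Gram matrix of the columns of `B`. Applying Gram–Schmidt to these columns gives an orthonormal
basis, in which the coordinates of the columns form an upper triangular matrix with positive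
diagonal and the same Gram matrix.
-/

open Matrix ComplexOrder

/-- Upper triangular complex matrices whose diagonal entries are real and strictly positive. -/
def upperPos (m : ℕ) : Set (Matrix (Fin m) (Fin m) ℂ) :=
  {L | (∀ i j : Fin m, j < i → L i j = 0) ∧
    ∀ i, (0 : ℝ) < Complex.re (L i i) ∧ Complex.im (L i i) = 0}

lemma upperPos.diag_eq {m : ℕ} {L : Matrix (Fin m) (Fin m) ℂ} (hL : L ∈ upperPos m) (i : Fin m) :
    L i i = ((L i i).re : ℂ) :=
  Complex.ext (by simp) (by simp [(hL.2 i).2])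

lemma upperPos.diag_ne_zero {m : ℕ} {L : Matrix (Fin m) (Fin m) ℂ} (hL : L ∈ upperPos m)
    (i : Fin m) : L i i ≠ 0 := fun h => by
  have := (hL.2 i).1
  simp [h] at this

lemma upperPos.conjTranspose_mul_self_apply {m : ℕ} {L : Matrix (Fin m) (Fin m) ℂ}
    (hL : L ∈ upperPos m) (i j : Fin m) :
    (Lᴴ * L) i j = L i i * L i j + ∑ k ∈ Finset.Iio i, star (L k i) * L k j := by
  have hstar : star (L i i) = L i i := by
    rw [upperPos.diag_eq hL i]
    exact Complex.conj_ofReal _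
  have hsub : ∑ k ∈ Finset.Iic i, star (L k i) * L k j = ∑ k, star (L k i) * L k j := by
    refine Finset.sum_subset (Finset.subset_univ _) fun k _ hk => ?_
    rw [hL.1 k i (by simpa using hk)]
    simp
  simp only [Matrix.mul_apply, Matrix.conjTranspose_apply]
  rw [← hsub, ← Finset.Iio_insert, Finset.sum_insert (by simp), hstar]

/-- The pivot `L i i` is the square root of what remains of `(Lᴴ * L) i i` after eliminating the
rows above row `i`. -/
lemma upperPos.diag_re_eq_sqrt {m : ℕ} {L : Matrix (Fin m) (Fin m) ℂ}
    (hL : L ∈ upperPos m) (i : Fin m) :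
    (L i i).re =
      √(((Lᴴ * L) i i - ∑ k ∈ Finset.Iio i, star (L k i) * L k i).re) := by
  rw [upperPos.conjTranspose_mul_self_apply hL, add_sub_cancel_right, Complex.mul_re, (hL.2 i).2,
    mul_zero, sub_zero, Real.sqrt_mul_self (hL.2 i).1.le]

lemma upperPos.apply_eq_div {m : ℕ} {L : Matrix (Fin m) (Fin m) ℂ}
    (hL : L ∈ upperPos m) (i j : Fin m) :
    L i j = ((Lᴴ * L) i j - ∑ k ∈ Finset.Iio i, star (L k i) * L k j) / L i i := by
  rw [upperPos.conjTranspose_mul_self_apply hL, add_sub_cancel_right,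
    mul_div_cancel_left₀ _ (upperPos.diag_ne_zero hL i)]

lemma upperPos.injOn (m : ℕ) :
    Set.InjOn (fun L : Matrix (Fin m) (Fin m) ℂ => Lᴴ * L) (upperPos m) := by
  intro L hL M hM (h : Lᴴ * L = Mᴴ * M)
  ext i j
  induction i using WellFoundedLT.induction generalizing j with
  | ind i ih =>
    have hsum (j : Fin m) : ∑ k ∈ Finset.Iio i, star (L k i) * L k j =
        ∑ k ∈ Finset.Iio i, star (M k i) * M k j :=
      Finset.sum_congr rfl fun k hk => by
        rw [ih k (Finset.mem_Iio.1 hk), ih k (Finset.mem_Iio.1 hk)]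
    have hdiag : L i i = M i i := by
      rw [upperPos.diag_eq hL, upperPos.diag_eq hM, upperPos.diag_re_eq_sqrt hL,
        upperPos.diag_re_eq_sqrt hM, h, hsum]
    rw [upperPos.apply_eq_div hL, upperPos.apply_eq_div hM, h, hsum, hdiag]

/-- A family of Cholesky factors is continuous as soon as the family of products is; applied to the
inverse of the Cholesky map, this is the continuity of that inverse. -/
lemma upperPos.continuous_of_product {m : ℕ} {X : Type*} [TopologicalSpace X]
    {g : X → Matrix (Fin m) (Fin m) ℂ} (hg : ∀ x, g x ∈ upperPos m)
    (hc : Continuous fun x => (g x)ᴴ * g x) : Continuous g := by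
  refine continuous_matrix fun i j => ?_
  induction i using WellFoundedLT.induction generalizing j with
  | ind i ih =>
    have hschur (j : Fin m) : Continuous fun x =>
        ((g x)ᴴ * g x) i j - ∑ k ∈ Finset.Iio i, star (g x k i) * g x k j :=
      (hc.matrix_elem i j).sub <| continuous_finsetSum _ fun k hk =>
        (ih k (Finset.mem_Iio.1 hk) i).star.mul (ih k (Finset.mem_Iio.1 hk) j)
    have hdiag : Continuous fun x => g x i i := by
      have : (fun x => g x i i) = fun x => ((√((((g x)ᴴ * g x) i i -
          ∑ k ∈ Finset.Iio i, star (g x k i) * g x k i).re) : ℝ) : ℂ) := by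
        funext x
        rw [← upperPos.diag_re_eq_sqrt (hg x), ← upperPos.diag_eq (hg x)]
      rw [this]
      exact Complex.continuous_ofReal.comp
        (Real.continuous_sqrt.comp (Complex.continuous_re.comp (hschur i)))
    have hrow : (fun x => g x i j) = fun x => (((g x)ᴴ * g x) i j -
        ∑ k ∈ Finset.Iio i, star (g x k i) * g x k j) / g x i i :=
      funext fun x => upperPos.apply_eq_div (hg x) i j
    rw [hrow]
    exact (hschur j).div hdiag fun x => upperPos.diag_ne_zero (hg x) i

lemma upperPos.posDef {m : ℕ} {L : Matrix (Fin m) (Fin m) ℂ} (hL : L ∈ upperPos m) :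
    (Lᴴ * L).PosDef := by
  refine Matrix.PosDef.conjTranspose_mul_self L (mulVec_injective_iff_isUnit.2 ?_)
  rw [Matrix.isUnit_iff_isUnit_det,
    Matrix.det_of_isUpperTriangular (fun i j hij => hL.1 i j hij), isUnit_iff_ne_zero]
  exact Finset.prod_ne_zero_iff.2 fun i _ => upperPos.diag_ne_zero hL i

open scoped MatrixOrder Matrix.Norms.L2Operator in
lemma Matrix.PosDef.exists_isUnit_conjTranspose_mul_self {m : ℕ} {P : Matrix (Fin m) (Fin m) ℂ}
    (hP : P.PosDef) : ∃ B : Matrix (Fin m) (Fin m) ℂ, IsUnit B ∧ P = Bᴴ * B := by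
  obtain ⟨B, hB⟩ := CStarAlgebra.nonneg_iff_eq_star_mul_self.mp hP.posSemidef.nonneg
  refine ⟨B, ?_, hB⟩
  have h := hP.isUnit
  rw [hB] at h
  rw [Matrix.isUnit_iff_isUnit_det] at h ⊢
  rw [Matrix.det_mul] at h
  exact isUnit_of_mul_isUnit_right h

open InnerProductSpace in
lemma upperPos.surjOn (m : ℕ) :
    Set.SurjOn (fun L : Matrix (Fin m) (Fin m) ℂ => Lᴴ * L) (upperPos m) {P | P.PosDef} := by
  intro P hP
  obtain ⟨B, hB, rfl⟩ := Matrix.PosDef.exists_isUnit_conjTranspose_mul_self hP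
  let f : Fin m → EuclideanSpace ℂ (Fin m) := fun j => WithLp.toLp 2 (B.col j)
  have hf : LinearIndependent ℂ f :=
    (linearIndependent_cols_iff_isUnit.2 hB).map'
      (WithLp.linearEquiv 2 ℂ (Fin m → ℂ)).symm.toLinearMap (LinearEquiv.ker _)
  have hdim : Module.finrank ℂ (EuclideanSpace ℂ (Fin m)) = Fintype.card (Fin m) := by simp
  let b := gramSchmidtOrthonormalBasis hdim f
  have hgs (i : Fin m) : gramSchmidt ℂ f i ≠ 0 := gramSchmidt_ne_zero i hf
  -- `f i` differs from the Gram–Schmidt vector by a combination of vectors orthogonal to it.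
  have hinner (i : Fin m) : inner ℂ (gramSchmidt ℂ f i) (f i) =
      ((‖gramSchmidt ℂ f i‖ ^ 2 : ℝ) : ℂ) := by
    conv_lhs => rw [gramSchmidt_def'' ℂ f i]
    rw [inner_add_right, inner_sum, Finset.sum_eq_zero, add_zero, inner_self_eq_norm_sq_to_K]
    · simp
    · intro k hk
      rw [inner_smul_right, gramSchmidt_orthogonal ℂ f (Finset.mem_Iio.1 hk).ne', mul_zero]
  have hdiag (i : Fin m) : inner ℂ (b i) (f i) = (‖gramSchmidt ℂ f i‖ : ℂ) := by
    have hne : (‖gramSchmidt ℂ f i‖ : ℂ) ≠ 0 := by simpa using hgs i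
    have hb : b i = gramSchmidtNormed ℂ f i :=
      gramSchmidtOrthonormalBasis_apply hdim (by simpa [gramSchmidtNormed] using hgs i)
    rw [hb, gramSchmidtNormed, inner_smul_left, hinner]
    simp
    field_simp
  refine ⟨Matrix.of fun i j => inner ℂ (b i) (f j), ⟨fun i j hij => ?_, fun i => ?_⟩, ?_⟩
  · exact gramSchmidtOrthonormalBasis_inv_triangular hdim f hij
  · simp only [Matrix.of_apply, hdiag]
    simpa using hgs i
  · ext i j
    have h := b.sum_inner_mul_inner (f i) (f j)
    simp only [Matrix.mul_apply, Matrix.conjTranspose_apply, Matrix.of_apply]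
    refine Eq.trans ?_ (h.trans ?_)
    · refine Finset.sum_congr rfl fun k _ => ?_
      rw [← inner_conj_symm (f i) (b k)]
      rfl
    · simp [f, PiLp.inner_apply, mul_comm]

theorem cholesky_map_homeomorphism (m : ℕ) (hm : 0 < m) :
    Set.BijOn (fun L : Matrix (Fin m) (Fin m) ℂ => Lᴴ * L)
      {L : Matrix (Fin m) (Fin m) ℂ |
        (∀ i j : Fin m, j < i → L i j = 0) ∧
          ∀ i, (0 : ℝ) < Complex.re (L i i) ∧ Complex.im (L i i) = 0}
      {P : Matrix (Fin m) (Fin m) ℂ | P.PosDef} ∧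
    ∃ h : ({L : Matrix (Fin m) (Fin m) ℂ |
        (∀ i j : Fin m, j < i → L i j = 0) ∧
          ∀ i, (0 : ℝ) < Complex.re (L i i) ∧ Complex.im (L i i) = 0} : Set _) ≃ₜ
        ({P : Matrix (Fin m) (Fin m) ℂ | P.PosDef} : Set _),
      ∀ L, (h L : Matrix (Fin m) (Fin m) ℂ) =
        (L : Matrix (Fin m) (Fin m) ℂ)ᴴ * (L : Matrix (Fin m) (Fin m) ℂ) := by
  have hbij : Set.BijOn (fun L : Matrix (Fin m) (Fin m) ℂ => Lᴴ * L) (upperPos m)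
      {P | P.PosDef} := ⟨fun _ hL => upperPos.posDef hL, upperPos.injOn m, upperPos.surjOn m⟩
  refine ⟨hbij, ?_⟩
  let e : upperPos m ≃ {P : Matrix (Fin m) (Fin m) ℂ | P.PosDef} := hbij.equiv _
  have he (L : upperPos m) : (e L : Matrix (Fin m) (Fin m) ℂ) = (L.1)ᴴ * L.1 := rfl
  refine ⟨⟨e, ?_, ?_⟩, he⟩
  · exact Continuous.subtype_mk (by fun_prop) _
  · refine Continuous.subtype_mk (f := fun P => (e.symm P).1)
      (upperPos.continuous_of_product (fun P => (e.symm P).2) ?_) _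
    have : (fun P => ((e.symm P).1)ᴴ * (e.symm P).1) = Subtype.val := by
      funext P
      rw [← he, e.apply_symm_apply]
    rw [this]
    exact continuous_subtype_val
end

section
/- Let V : Fin D → Matrix (Fin m) (Fin m) ℂ be a finite family and σ : Fin m → ℝ with σ i ≥ 0 for all i. Suppose the diagonal matrix diagonal σ is a fixed point of the transfer map: ∑_α (V α)ᴴ * (Matrix.diagonal (σ · : Fin m → ℂ)) * (V α) = Matrix.diagonal σ. Then for all indices a, b : Fin m with σ a = 0 and σ b > 0, and for every α : Fin D, the entry (V α) b a = 0. -/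
open Matrix

/-!
The `(a, a)` entry of the fixed-point equation reads `∑ α, ∑ i, σ i * |V α i a|² = σ a`. When
`σ a = 0`, this is a vanishing sum of nonnegative terms, so every term is zero, and the term of
index `(α, b)` forces `V α b a = 0` as soon as `σ b > 0`.
-/

theorem entries_vanish_of_diagonal_fixed_point
    {D m : ℕ}
    (V : Fin D → Matrix (Fin m) (Fin m) ℂ)
    (σ : Fin m → ℝ) (hσ : ∀ i, 0 ≤ σ i)
    (hfix : ∑ α, (V α)ᴴ * (Matrix.diagonal fun i => (σ i : ℂ)) * V α =
      Matrix.diagonal fun i => (σ i : ℂ)) :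
    ∀ a b : Fin m, σ a = 0 → 0 < σ b → ∀ α : Fin D, V α b a = 0 := by
  intro a b ha hb α
  -- the `(a, a)` entry of the fixed-point equation, as an identity of reals
  have hsum : ∑ α, ∑ i, σ i * Complex.normSq (V α i a) = 0 := by
    have h := congrFun (congrFun hfix a) a
    rw [Matrix.sum_apply, Matrix.diagonal_apply_eq, ha] at h
    apply Complex.ofReal_injective
    rw [← h]
    push_cast
    refine Finset.sum_congr rfl fun β _ => ?_
    rw [Matrix.mul_apply]
    refine Finset.sum_congr rfl fun i _ => ?_
    rw [Matrix.mul_diagonal, Matrix.conjTranspose_apply, Complex.normSq_eq_conj_mul_self,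
      starRingEnd_apply]
    ring
  have hnn : ∀ β i, 0 ≤ σ i * Complex.normSq (V β i a) := fun β i =>
    mul_nonneg (hσ i) (Complex.normSq_nonneg _)
  have h1 := (Finset.sum_eq_zero_iff_of_nonneg
    fun β _ => Finset.sum_nonneg fun i _ => hnn β i).1 hsum α (Finset.mem_univ _)
  have h2 := (Finset.sum_eq_zero_iff_of_nonneg fun i _ => hnn α i).1 h1 b (Finset.mem_univ _)
  exact Complex.normSq_eq_zero.1 ((mul_eq_zero.1 h2).resolve_left hb.ne')
end

section
/- Let n, m, χ be positive integers and c_L, c_R > 0 real with D := c_L · c_R. Let h_L : Fin χ → Matrix (Fin n) (Fin n) ℂ and h_R : Fin χ → Matrix (Fin m) (Fin m) ℂ satisfy trace((h_L a)ᴴ * (h_L b)) = c_L · δ_{ab} and trace((h_R a)ᴴ * (h_R b)) = c_R · δ_{ab}. Let M : Matrix (Fin χ) (Fin χ) ℂ have a singular value decomposition M = U * diagonal (s ·) * Vᴴ with U, V unitary and s : Fin χ → ℝ nonincreasing with s a ≥ 0. Let H_L : Matrix (Fin n) (Fin n) ℂ, H_R : Matrix (Fin m) (Fin m) ℂ, and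 define O_L a := ∑_b (U b a) • h_L b, O_R a := ∑_b (star (V b a)) • h_R b, H := H_L ⊗ₖ 1 + 1 ⊗ₖ H_R + ∑_{a,b} (M a b) • (h_L a ⊗ₖ h_R b), and for χ' < χ, H' := H_L ⊗ₖ 1 + 1 ⊗ₖ H_R + ∑_{a ≤ χ'} (s a) • (O_L a ⊗ₖ O_R a). Suppose H and H' are Hermitian. Then |λ_min(H) − λ_min(H')| ≤ ‖H − H'‖ ≤ sqrt(D · ∑_{a = χ'+1}^{χ} (s a)²), where λ_min denotes the smallest eigenvalue of a Hermitian matrix and ‖·‖ is the ℓ²→ℓ² operator norm (largest singular value). -/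
/-!
The interaction part of `H` is diagonalised by the singular value decomposition: substituting
`M = U diag(s) Vᴴ` gives `∑ M a b • hL a ⊗ hR b = ∑ s a • OL a ⊗ OR a`, so `H - H'` is the tail of
this sum over `χ' ≤ a`. Unitary mixing preserves Hilbert-Schmidt orthogonality
(`trace_mixed`), hence the products `OL a ⊗ OR a` are orthogonal with squared
Hilbert-Schmidt norm `cL * cR`, and the squared Hilbert-Schmidt norm of the tail is
`cL * cR * ∑ s a ^ 2` (`sum_norm_sq_tail`). The operator norm is at most the Hilbert-Schmidt norm
(`opNorm_le_hilbertSchmidt`).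

The eigenvalue estimate is Weyl's inequality for the smallest eigenvalue: evaluating the quadratic
form of `H` on a unit ground state of `H'` bounds `λ_min(H)` by `λ_min(H') + ‖H - H'‖`
(`iInf_eigenvalues_le`), and the roles of the two matrices are symmetric.
-/

open Matrix Kronecker

/-- The operator norm is bounded by the Hilbert-Schmidt norm (Cauchy-Schwarz on each row). -/
lemma opNorm_le_hilbertSchmidt {ι : Type*} [Fintype ι] [DecidableEq ι] (A : Matrix ι ι ℂ) :
    ‖Matrix.toEuclideanCLM (𝕜 := ℂ) A‖ ≤ Real.sqrt (∑ i, ∑ j, ‖A i j‖ ^ 2) := by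
  refine ContinuousLinearMap.opNorm_le_bound _ (Real.sqrt_nonneg _) fun v => ?_
  rw [EuclideanSpace.norm_eq, EuclideanSpace.norm_eq, ← Real.sqrt_mul (by positivity)]
  refine Real.sqrt_le_sqrt ?_
  rw [Finset.sum_mul]
  refine Finset.sum_le_sum fun i _ => ?_
  have h1 : ‖(Matrix.toEuclideanCLM (𝕜 := ℂ) A v) i‖ ≤ ∑ j, ‖A i j‖ * ‖v j‖ := by
    have : (Matrix.toEuclideanCLM (𝕜 := ℂ) A v) i = ∑ j, A i j * v j := by
      rw [Matrix.ofLp_toEuclideanCLM]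
      rfl
    rw [this]
    refine (norm_sum_le _ _).trans (le_of_eq ?_)
    simp
  calc _ ≤ (∑ j, ‖A i j‖ * ‖v j‖) ^ 2 := by gcongr
    _ ≤ _ := Finset.sum_mul_sq_le_sq_mul_sq _ _ _

lemma sum_norm_sq_eq_trace {ι : Type*} [Fintype ι] (A : Matrix ι ι ℂ) :
    ((∑ i, ∑ j, ‖A i j‖ ^ 2 : ℝ) : ℂ) = Matrix.trace (Aᴴ * A) := by
  rw [Finset.sum_comm]
  simp [Matrix.trace, Matrix.mul_apply, ← Complex.normSq_eq_conj_mul_self,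
    Complex.normSq_eq_norm_sq]

/-- Mixing a Hilbert-Schmidt orthogonal family by a matrix with orthonormal columns keeps it
orthogonal, with the same norms. -/
lemma trace_mixed {k χ : ℕ} (c : ℝ) (h : Fin χ → Matrix (Fin k) (Fin k) ℂ)
    (htr : ∀ a b, Matrix.trace ((h a)ᴴ * h b) = if a = b then (c : ℂ) else 0)
    (W : Matrix (Fin χ) (Fin χ) ℂ) (hW : Wᴴ * W = 1) (a b : Fin χ) :
    Matrix.trace ((∑ i, W i a • h i)ᴴ * ∑ i, W i b • h i) = if a = b then (c : ℂ) else 0 := by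
  have h1 := congrFun (congrFun hW a) b
  simp only [Matrix.mul_apply, Matrix.conjTranspose_apply, Matrix.one_apply] at h1
  simp only [Matrix.conjTranspose_sum, Matrix.conjTranspose_smul, Finset.sum_mul, Finset.mul_sum,
    Matrix.trace_sum, Matrix.smul_mul, Matrix.mul_smul, Matrix.trace_smul, htr, smul_eq_mul,
    mul_ite, mul_zero, Finset.sum_ite_eq', Finset.mem_univ, if_true]
  calc _ = (∑ x, star (W x a) * W x b) * (c : ℂ) := by
        rw [Finset.sum_mul]
        exact Finset.sum_congr rfl fun x _ => by ring
    _ = _ := by rw [h1]; split_ifs <;> simp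

/-- The Hilbert-Schmidt norm of a partial sum of the operator Schmidt decomposition
(Pythagoras). -/
lemma sum_norm_sq_tail {n m χ : ℕ} (cL cR : ℝ)
    (OL : Fin χ → Matrix (Fin n) (Fin n) ℂ) (OR : Fin χ → Matrix (Fin m) (Fin m) ℂ)
    (hL : ∀ a b, Matrix.trace ((OL a)ᴴ * OL b) = if a = b then (cL : ℂ) else 0)
    (hR : ∀ a b, Matrix.trace ((OR a)ᴴ * OR b) = if a = b then (cR : ℂ) else 0)
    (s : Fin χ → ℝ) (S : Finset (Fin χ)) :
    ∑ i, ∑ j, ‖(∑ a ∈ S, (s a : ℂ) • (OL a ⊗ₖ OR a)) i j‖ ^ 2 =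
      (cL * cR) * ∑ a ∈ S, s a ^ 2 := by
  apply Complex.ofReal_injective
  rw [sum_norm_sq_eq_trace]
  simp only [Matrix.conjTranspose_sum, Matrix.conjTranspose_smul, Finset.sum_mul, Finset.mul_sum,
    Matrix.trace_sum, Matrix.smul_mul, Matrix.mul_smul, Matrix.trace_smul,
    Matrix.conjTranspose_kronecker, ← Matrix.mul_kronecker_mul, Matrix.trace_kronecker, hL, hR,
    smul_eq_mul, mul_ite, ite_mul, mul_zero, zero_mul]
  push_cast
  refine Finset.sum_congr rfl fun a ha => ?_
  rw [Finset.sum_eq_single_of_mem a ha]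
  · simp
    ring
  · intro b _ hb
    simp [hb]

/-- Substituting the singular value decomposition gives the operator Schmidt decomposition. -/
lemma interaction_eq {n m χ : ℕ}
    (hL : Fin χ → Matrix (Fin n) (Fin n) ℂ) (hR : Fin χ → Matrix (Fin m) (Fin m) ℂ)
    (U V : Matrix (Fin χ) (Fin χ) ℂ) (s : Fin χ → ℝ) :
    ∑ a, ∑ b, (U * (Matrix.diagonal fun a => (s a : ℂ)) * Vᴴ) a b • (hL a ⊗ₖ hR b) =
      ∑ c, (s c : ℂ) •
        ((∑ a, U a c • hL a) ⊗ₖ (∑ b, (starRingEnd ℂ) (V b c) • hR b)) := by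
  ext ⟨i, k⟩ ⟨j, l⟩
  simp only [Matrix.sum_apply, Matrix.smul_apply, Matrix.kroneckerMap_apply, smul_eq_mul,
    Matrix.mul_apply (N := Vᴴ), Matrix.mul_diagonal, Matrix.conjTranspose_apply,
    Finset.sum_mul, Finset.mul_sum]
  rw [Finset.sum_congr rfl fun a _ => Finset.sum_comm, Finset.sum_comm]
  refine Finset.sum_congr rfl fun c _ => ?_
  rw [Finset.sum_comm]
  refine Finset.sum_congr rfl fun b _ => Finset.sum_congr rfl fun a _ => ?_
  simp only [starRingEnd_apply]
  ring

/-- The smallest eigenvalue bounds the quadratic form from below: expand in an eigenbasis. -/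
lemma iInf_eigenvalues_mul_le {ι : Type*} [Fintype ι] [DecidableEq ι] {A : Matrix ι ι ℂ}
    (hA : A.IsHermitian) (v : EuclideanSpace ℂ ι) :
    (⨅ i, hA.eigenvalues i) * ‖v‖ ^ 2 ≤
      (inner ℂ v (Matrix.toEuclideanCLM (𝕜 := ℂ) A v)).re := by
  have hev : ∀ i, Matrix.toEuclideanCLM (𝕜 := ℂ) A (hA.eigenvectorBasis i) =
      (hA.eigenvalues i : ℂ) • hA.eigenvectorBasis i := by
    intro i
    apply (WithLp.ofLp_injective 2)
    rw [Matrix.ofLp_toEuclideanCLM, hA.mulVec_eigenvectorBasis]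
    rfl
  have hsa : ContinuousLinearMap.adjoint (Matrix.toEuclideanCLM (𝕜 := ℂ) A) =
      Matrix.toEuclideanCLM (𝕜 := ℂ) A := by
    rw [← ContinuousLinearMap.star_eq_adjoint, ← map_star, Matrix.star_eq_conjTranspose, hA.eq]
  have hin : ∀ i, inner ℂ (hA.eigenvectorBasis i) (Matrix.toEuclideanCLM (𝕜 := ℂ) A v) =
      (hA.eigenvalues i : ℂ) * inner ℂ (hA.eigenvectorBasis i) v := by
    intro i
    rw [← ContinuousLinearMap.adjoint_inner_left, hsa, hev, inner_smul_left, Complex.conj_ofReal]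
  rw [← hA.eigenvectorBasis.sum_inner_mul_inner, Complex.re_sum,
    ← hA.eigenvectorBasis.sum_sq_norm_inner_right, Finset.mul_sum]
  refine Finset.sum_le_sum fun i _ => ?_
  have : inner ℂ v (hA.eigenvectorBasis i) *
      inner ℂ (hA.eigenvectorBasis i) (Matrix.toEuclideanCLM (𝕜 := ℂ) A v) =
      ((hA.eigenvalues i * ‖inner ℂ (hA.eigenvectorBasis i) v‖ ^ 2 : ℝ) : ℂ) := by
    rw [hin, ← inner_conj_symm v, mul_left_comm, Complex.conj_mul']
    push_cast
    rfl
  rw [this, Complex.ofReal_re]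
  gcongr
  exact ciInf_le (Set.finite_range _).bddBelow i

/-- One half of Weyl's inequality for the smallest eigenvalue. -/
lemma iInf_eigenvalues_le {ι : Type*} [Fintype ι] [DecidableEq ι] [Nonempty ι]
    {A B : Matrix ι ι ℂ} (hA : A.IsHermitian) (hB : B.IsHermitian) :
    (⨅ i, hA.eigenvalues i) ≤
      (⨅ i, hB.eigenvalues i) + ‖Matrix.toEuclideanCLM (𝕜 := ℂ) (A - B)‖ := by
  obtain ⟨i, hi⟩ := exists_eq_ciInf_of_finite (f := hB.eigenvalues)
  rw [← hi]
  set v := hB.eigenvectorBasis i with hv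
  have hn : ‖v‖ = 1 := hB.eigenvectorBasis.orthonormal.1 i
  have h1 := iInf_eigenvalues_mul_le hA v
  have hBv : Matrix.toEuclideanCLM (𝕜 := ℂ) B v = (hB.eigenvalues i : ℂ) • v := by
    apply (WithLp.ofLp_injective 2)
    rw [Matrix.ofLp_toEuclideanCLM, hB.mulVec_eigenvectorBasis]
    rfl
  have hAv : Matrix.toEuclideanCLM (𝕜 := ℂ) A v =
      (hB.eigenvalues i : ℂ) • v + Matrix.toEuclideanCLM (𝕜 := ℂ) (A - B) v := by
    rw [← hBv, map_sub]
    simp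
  have h2 : (inner ℂ v (Matrix.toEuclideanCLM (𝕜 := ℂ) (A - B) v)).re ≤
      ‖Matrix.toEuclideanCLM (𝕜 := ℂ) (A - B)‖ := by
    refine (Complex.re_le_norm _).trans ((norm_inner_le_norm _ _).trans ?_)
    simpa [hn] using (Matrix.toEuclideanCLM (𝕜 := ℂ) (A - B)).le_opNorm v
  rw [hAv, inner_add_right, inner_smul_right, inner_self_eq_norm_sq_to_K, hn] at h1
  simp [-map_sub] at h1
  linarith

theorem ground_state_energy_error_bound
    {n m χ : ℕ} (hn : 0 < n) (hm : 0 < m) (hχ : 0 < χ)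
    (cL cR : ℝ) (hcL : 0 < cL) (hcR : 0 < cR)
    (hL : Fin χ → Matrix (Fin n) (Fin n) ℂ)
    (hR : Fin χ → Matrix (Fin m) (Fin m) ℂ)
    (htrL : ∀ a b, Matrix.trace ((hL a)ᴴ * hL b) = if a = b then (cL : ℂ) else 0)
    (htrR : ∀ a b, Matrix.trace ((hR a)ᴴ * hR b) = if a = b then (cR : ℂ) else 0)
    (M U V : Matrix (Fin χ) (Fin χ) ℂ)
    (hU : U ∈ Matrix.unitaryGroup (Fin χ) ℂ)
    (hV : V ∈ Matrix.unitaryGroup (Fin χ) ℂ)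
    (s : Fin χ → ℝ) (hs_anti : Antitone s) (hs_nonneg : ∀ a, 0 ≤ s a)
    (hSVD : M = U * (Matrix.diagonal fun a => (s a : ℂ)) * Vᴴ)
    (HL : Matrix (Fin n) (Fin n) ℂ) (HR : Matrix (Fin m) (Fin m) ℂ)
    (OL : Fin χ → Matrix (Fin n) (Fin n) ℂ)
    (hOL : ∀ a, OL a = ∑ b, U b a • hL b)
    (OR : Fin χ → Matrix (Fin m) (Fin m) ℂ)
    (hOR : ∀ a, OR a = ∑ b, (starRingEnd ℂ) (V b a) • hR b)
    (H H' : Matrix (Fin n × Fin m) (Fin n × Fin m) ℂ)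
    (hHdef : H = HL ⊗ₖ (1 : Matrix (Fin m) (Fin m) ℂ) +
      (1 : Matrix (Fin n) (Fin n) ℂ) ⊗ₖ HR +
      ∑ a, ∑ b, M a b • (hL a ⊗ₖ hR b))
    (χ' : ℕ) (hχ' : χ' < χ)
    (hH'def : H' = HL ⊗ₖ (1 : Matrix (Fin m) (Fin m) ℂ) +
      (1 : Matrix (Fin n) (Fin n) ℂ) ⊗ₖ HR +
      ∑ a ∈ Finset.univ.filter (fun a : Fin χ => (a : ℕ) < χ'),
        (s a : ℂ) • (OL a ⊗ₖ OR a))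
    (hH : H.IsHermitian) (hH' : H'.IsHermitian) :
    |(⨅ i, hH.eigenvalues i) - ⨅ i, hH'.eigenvalues i| ≤
        ‖Matrix.toEuclideanCLM (𝕜 := ℂ) (H - H')‖ ∧
      ‖Matrix.toEuclideanCLM (𝕜 := ℂ) (H - H')‖ ≤
        Real.sqrt ((cL * cR) *
          ∑ a ∈ Finset.univ.filter (fun a : Fin χ => χ' ≤ (a : ℕ)), s a ^ 2) := by
  have hOLtr : ∀ a b, Matrix.trace ((OL a)ᴴ * OL b) = if a = b then (cL : ℂ) else 0 := by
    intro a b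
    rw [hOL, hOL]
    exact trace_mixed cL hL htrL U (Matrix.mem_unitaryGroup_iff'.mp hU) a b
  have hORtr : ∀ a b, Matrix.trace ((OR a)ᴴ * OR b) = if a = b then (cR : ℂ) else 0 := by
    intro a b
    rw [hOR, hOR]
    -- The right factors are mixed by the entrywise conjugate of `V`, which is again unitary.
    refine trace_mixed cR hR htrR (V.map (starRingEnd ℂ)) ?_ a b
    have h := congrArg (fun X => X.map (starRingEnd ℂ)) (Matrix.mem_unitaryGroup_iff'.mp hV)
    simp only [Matrix.map_mul, Matrix.star_eq_conjTranspose] at h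
    rw [← Matrix.conjTranspose_map _ (fun x => by simp), h]
    ext i j
    simp [Matrix.one_apply, apply_ite]
  have hdiff : H - H' = ∑ a ∈ Finset.univ.filter (fun a : Fin χ => χ' ≤ (a : ℕ)),
      (s a : ℂ) • (OL a ⊗ₖ OR a) := by
    rw [hHdef, hH'def, hSVD, interaction_eq]
    simp only [← hOL, ← hOR]
    rw [← Finset.sum_filter_add_sum_filter_not Finset.univ (fun a : Fin χ => (a : ℕ) < χ')]
    simp only [not_lt]
    abel
  constructor
  · have : Nonempty (Fin n × Fin m) := ⟨(⟨0, hn⟩, ⟨0, hm⟩)⟩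
    have h1 := iInf_eigenvalues_le hH hH'
    have h2 := iInf_eigenvalues_le hH' hH
    rw [← neg_sub H H', map_neg, norm_neg] at h2
    rw [abs_le]
    constructor <;> linarith
  · rw [← sum_norm_sq_tail cL cR OL OR hOLtr hORtr, ← hdiff]
    exact opNorm_le_hilbertSchmidt _
end
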